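/- Let p and q be primes with p ≡ 1 (mod 4), q ≡ 3 (mod 4), such that −p is a quadratic residue modulo q, and let c be an integer with c² ≡ −p (mod q). Work in ℍ[ℚ, −q, −p]. Then the subring of ℍ[ℚ, −q, −p] generated by (1+i)/2, j and (ci+k)/q is a maximal order; it contains the subring ℤ·1 + ℤ·(1+i)/2 + ℤ·j + ℤ·(j+k)/2, and its quotient by that subring, as an additive group, has exactly q elements. The same holds for the subring generated by (1+i)/2, j and (ci−k)/q. -/

import Mathlib

open Quaternion

/-- The reduced norm on the quaternion algebra `ℍ[ℚ, a, b]`. -/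
noncomputable def Nrd {a b : ℚ} (α : ℍ[ℚ, a, b]) : ℚ := (α * star α).re

/-- The reduced trace on the quaternion algebra `ℍ[ℚ, a, b]`. -/
noncomputable def Trd {a b : ℚ} (α : ℍ[ℚ, a, b]) : ℚ := (α + star α).re

/-- An order in `ℍ[ℚ, a, b]`: a subring containing 1 that spans the algebra over `ℚ` and all of
whose elements have reduced trace and reduced norm in `ℤ`. -/
def IsOrder {a b : ℚ} (O : Set ℍ[ℚ, a, b]) : Prop :=
  (∃ S : Subring ℍ[ℚ, a, b], (S : Set ℍ[ℚ, a, b]) = O) ∧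
  Submodule.span ℚ O = ⊤ ∧
  ∀ x ∈ O, (∃ t : ℤ, Trd x = (t : ℚ)) ∧ (∃ n : ℤ, Nrd x = (n : ℚ))

/-- A maximal order: an order not properly contained in any other order. -/
def IsMaximalOrder {a b : ℚ} (O : Set ℍ[ℚ, a, b]) : Prop :=
  IsOrder O ∧ ∀ O' : Set ℍ[ℚ, a, b], IsOrder O' → O ⊆ O' → O' = O

/-- The suborder `ℤ·1 + ℤ·(1+i)/2 + ℤ·j + ℤ·(j+k)/2` of `ℍ[ℚ, −q, −p]` (that is, `R + Rj` for
`R = ℤ[(1+i)/2]`), as a `ℤ`-submodule. -/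
def baseLattice (q p : ℚ) : Submodule ℤ ℍ[ℚ, -q, -p] :=
  Submodule.span ℤ ({1,
    ((2:ℚ)⁻¹) • ((1 : ℍ[ℚ, -q, -p]) + ⟨0,1,0,0⟩),
    ⟨0,0,1,0⟩,
    ((2:ℚ)⁻¹) • ((⟨0,0,1,0⟩ : ℍ[ℚ, -q, -p]) + ⟨0,0,0,1⟩)} : Set ℍ[ℚ, -q, -p])

/-!
Write `ω = (1 + i) / 2`, `θ = (c i + k) / q`, `q = 4 m - 1`, `c ^ 2 + p = q n`, and let `O` be the
ring generated by `ω`, `j` and `θ`. The lattice with basis `1, ω, j, ωθ` is stable under left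
multiplication by the generators, so it is `O`; traces and norms are then integral by inspection.
In these coordinates `ωj` has last entry `q`, so the base lattice `ℤ[ω] + ℤ[ω] j` consists of the
elements of `O` whose last coordinate is divisible by `q`, which gives the index.

For maximality, let `x` lie in an order containing `O`. Integrality of the traces of `x O` puts `x`
in the trace dual of `O`, whence `x j ∈ O`. The norm of `x j` is `p Nrd x`, divisible by `p`. But
`O / O j` is the field with `p ^ 2` elements: the norm of `O` modulo `p` reduces to
`X ^ 2 + X Y + m Y ^ 2`, of discriminant `-q`, which by reciprocity is a nonresidue modulo `p`
because `-p` is a residue modulo `q` (when `p = 2`, the latter forces `q ≡ 3 mod 8`, so `m` is odd).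
Hence `x j ∈ O j`, that is, `x ∈ O`.
-/

open scoped NumberTheorySymbols

namespace MaximalOrderDisc

section Quaternion

variable {a b : ℚ}

lemma Trd_eq (x : ℍ[ℚ,a,b]) : Trd x = 2 * x.re := by
  simp [Trd, two_mul]

lemma Nrd_eq (x : ℍ[ℚ,a,b]) :
    Nrd x = x.re ^ 2 - a * x.imI ^ 2 - b * x.imJ ^ 2 + a * b * x.imK ^ 2 := by
  simp only [Nrd, QuaternionAlgebra.re_mul, QuaternionAlgebra.re_star, QuaternionAlgebra.imI_star,
    QuaternionAlgebra.imJ_star, QuaternionAlgebra.imK_star]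
  ring

lemma Nrd_mul (x y : ℍ[ℚ,a,b]) : Nrd (x * y) = Nrd x * Nrd y := by
  simp only [Nrd_eq, QuaternionAlgebra.re_mul, QuaternionAlgebra.imI_mul,
    QuaternionAlgebra.imJ_mul, QuaternionAlgebra.imK_mul]
  ring

end Quaternion

lemma closure_subset_of_mul_mem_left {R : Type*} [Ring R] {s : Set R} {M : AddSubgroup R}
    (one_mem : 1 ∈ M) (mul_mem_left : ∀ a ∈ s, ∀ x ∈ M, a * x ∈ M) :
    (Subring.closure s : Set R) ⊆ M := by
  intro a ha
  suffices stable : ∀ x ∈ M, a * x ∈ M by simpa using stable 1 one_mem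
  induction ha using Subring.closure_induction with
  | mem a ha => exact mul_mem_left a ha
  | zero => simp
  | one => simp
  | add a b _ _ iha ihb => exact fun x hx ↦ by simpa [add_mul] using add_mem (iha x hx) (ihb x hx)
  | neg a _ iha => exact fun x hx ↦ by simpa using iha x hx
  | mul a b _ _ iha ihb => exact fun x hx ↦ by simpa [mul_assoc] using iha _ (ihb x hx)

section QuadraticResidue

lemma jacobiSym_neg_natCast_eq {a b : ℕ} (ha : Odd a) (hb : b % 4 = 3) :
    J(-b | a) = J(a | b) := by
  have hb' : Odd b := Nat.odd_iff.2 (by omega)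
  rw [jacobiSym.neg _ ha]
  rcases Nat.odd_mod_four_iff.1 (Nat.odd_iff.1 ha) with ha4 | ha4
  · rw [ZMod.χ₄_nat_one_mod_four ha4, one_mul, jacobiSym.quadratic_reciprocity_one_mod_four ha4 hb']
  · rw [ZMod.χ₄_nat_three_mod_four ha4, jacobiSym.quadratic_reciprocity_three_mod_four ha4 hb,
      neg_one_mul]

lemma jacobiSym_neg_eq_one_of_dvd_sq_add {a c : ℤ} {b : ℕ} (hab : IsCoprime a b)
    (hc : (b : ℤ) ∣ c ^ 2 + a) : J(-a | b) = 1 := by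
  have hcb : IsCoprime c b := by
    obtain ⟨n, hn⟩ := hc
    obtain rfl : a = -c ^ 2 + b * n := by linarith
    exact (IsCoprime.pow_left_iff two_pos).1
      (IsCoprime.neg_left_iff _ _ |>.1 (IsCoprime.add_mul_left_left_iff.1 hab))
  rw [← jacobiSym.sq_one' (Int.isCoprime_iff_gcd_eq_one.1 hcb)]
  exact jacobiSym.mod_left' (Int.modEq_iff_dvd.2 (by simpa using hc))

lemma mod_eight_eq_three_of_dvd_sq_add_two {q : ℕ} {c : ℤ} (hq3 : q % 4 = 3)
    (hc : (q : ℤ) ∣ c ^ 2 + 2) : q % 8 = 3 := by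
  have hq : Odd q := Nat.odd_iff.2 (by omega)
  have h : J(-2 | q) = 1 := jacobiSym_neg_eq_one_of_dvd_sq_add
    (mod_cast Nat.isCoprime_iff_coprime.2 (Nat.coprime_two_left.2 hq)) hc
  rw [jacobiSym.at_neg_two hq, ZMod.χ₈'_nat_eq_if_mod_eight] at h
  grind

lemma prime_dvd_of_dvd_sq_add_mul_add_mul_sq {p q : ℕ} (hp : p.Prime) (hpq : p.Coprime q) {c m : ℤ}
    (hm : (q : ℤ) = 4 * m - 1) (hc : (q : ℤ) ∣ c ^ 2 + p) {x y : ℤ}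
    (h : (p : ℤ) ∣ x ^ 2 + x * y + m * y ^ 2) : (p : ℤ) ∣ x ∧ (p : ℤ) ∣ y := by
  have hq3 : q % 4 = 3 := by omega
  obtain rfl | hp_odd := hp.eq_two_or_odd'
  · have hq8 := mod_eight_eq_three_of_dvd_sq_add_two hq3 hc
    have hm_odd : Odd m := by rw [Int.odd_iff]; omega
    simp only [Nat.cast_ofNat, ← even_iff_two_dvd] at h ⊢
    grind [Int.even_add, Int.even_pow, Int.not_even_iff_odd]
  · have := Fact.mk hp
    have nonresidue : J(-q | p) = -1 := by
      have residue := jacobiSym_neg_eq_one_of_dvd_sq_add (Nat.isCoprime_iff_coprime.2 hpq) hc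
      rw [jacobiSym.neg _ (Nat.odd_iff.2 (by omega)), ZMod.χ₄_nat_three_mod_four hq3] at residue
      rw [jacobiSym_neg_natCast_eq hp_odd hq3]
      linarith
    have completed_square : (p : ℤ) ∣ (2 * x + y) ^ 2 - -q * y ^ 2 := by
      have : (2 * x + y) ^ 2 - -q * y ^ 2 = 4 * (x ^ 2 + x * y + m * y ^ 2) := by
        rw [hm]
        ring
      exact this ▸ h.mul_left 4
    obtain ⟨h2xy, hy⟩ := jacobiSym.prime_dvd_of_eq_neg_one nonresidue completed_square
    have coprime_two : IsCoprime (p : ℤ) 2 :=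
      mod_cast Nat.isCoprime_iff_coprime.2 hp_odd.coprime_two_right
    exact ⟨coprime_two.dvd_of_dvd_mul_left ((dvd_add_left hy).1 h2xy), hy⟩

end QuadraticResidue

/-- The element `ω = (1 + i) / 2`. -/
noncomputable def omega (q p : ℚ) : ℍ[ℚ,-q,-p] :=
  (2 : ℚ)⁻¹ • ((1 : ℍ[ℚ,-q,-p]) + ⟨0, 1, 0, 0⟩)

/-- The quaternion unit `j`. -/
def unitJ (q p : ℚ) : ℍ[ℚ,-q,-p] := ⟨0, 0, 1, 0⟩

/-- The element `θ = (c i + k) / q`. -/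
noncomputable def theta (q p : ℚ) (c : ℤ) : ℍ[ℚ,-q,-p] :=
  q⁻¹ • ((c : ℚ) • (⟨0, 1, 0, 0⟩ : ℍ[ℚ,-q,-p]) + ⟨0, 0, 0, 1⟩)

/-- The subring generated by `ω`, `j` and `θ`, which turns out to be a maximal order. -/
noncomputable def generatedOrder (q p : ℚ) (c : ℤ) : Subring ℍ[ℚ,-q,-p] :=
  Subring.closure {omega q p, unitJ q p, theta q p c}

/-- The integral combination of `1, ω, j, ωθ` with the given coordinates; these four elements turn
out to be a `ℤ`-basis of `generatedOrder q p c`. -/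
noncomputable def ofCoords (q p : ℚ) (c : ℤ) : (Fin 4 → ℤ) →ₗ[ℤ] ℍ[ℚ,-q,-p] :=
  Fintype.linearCombination ℤ ![1, omega q p, unitJ q p, omega q p * theta q p c]

section Coordinates

variable {q p : ℚ} {c m n : ℤ}

lemma ne_zero_of_eq_four_mul_sub_one (hm : q = 4 * m - 1) : q ≠ 0 := by
  have : 4 * m - 1 ≠ 0 := by omega
  rw [hm]
  exact_mod_cast this

lemma omega_eq : omega q p = ⟨1 / 2, 1 / 2, 0, 0⟩ := by
  ext <;> simp [omega]

lemma theta_eq : theta q p c = ⟨0, c / q, 0, 1 / q⟩ := by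
  ext <;> simp [theta, div_eq_inv_mul]

lemma unitJ_mul_self : unitJ q p * unitJ q p = -p • 1 := by
  ext <;> simp [unitJ]

lemma ofCoords_apply (v : Fin 4 → ℤ) :
    ofCoords q p c v = v 0 • 1 + v 1 • omega q p + v 2 • unitJ q p
      + v 3 • (omega q p * theta q p c) := by
  simp [ofCoords, Fintype.linearCombination_apply, Fin.sum_univ_four]

lemma ofCoords_eq (hq : q ≠ 0) (v : Fin 4 → ℤ) :
    ofCoords q p c v = ⟨v 0 + v 1 / 2 - c * v 3 / 2, v 1 / 2 + c * v 3 / (2 * q),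
      v 2 - v 3 / 2, v 3 / (2 * q)⟩ := by
  have one_eq : (1 : ℍ[ℚ,-q,-p]) = ⟨1, 0, 0, 0⟩ := rfl
  simp only [ofCoords_apply, omega_eq, unitJ, theta_eq, one_eq, QuaternionAlgebra.mk_mul_mk,
    QuaternionAlgebra.smul_mk, QuaternionAlgebra.mk_add_mk, QuaternionAlgebra.mk.injEq,
    zsmul_eq_mul]
  refine ⟨?_, ?_, ?_, ?_⟩ <;> field_simp <;> ring

lemma ofCoords_injective (hq : q ≠ 0) : Function.Injective (ofCoords q p c) := by
  intro v w h
  simp only [ofCoords_eq hq, QuaternionAlgebra.mk.injEq] at h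
  obtain ⟨h_re, h_imI, h_imJ, h_imK⟩ := h
  have h₃ : (v 3 : ℚ) = w 3 := by field_simp at h_imK; exact h_imK
  have h₂ : (v 2 : ℚ) = w 2 := by rw [h₃] at h_imJ; linarith
  have h₁ : (v 1 : ℚ) = w 1 := by rw [h₃] at h_imI; linarith
  have h₀ : (v 0 : ℚ) = w 0 := by rw [h₃, h₁] at h_re; linarith
  ext i
  fin_cases i
  exacts [mod_cast h₀, mod_cast h₁, mod_cast h₂, mod_cast h₃]

-- The coordinates in the next three lemmas come from `ω² = ω - m`, `j² = -p`, `θ² = -n`,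
-- `jω = j - ωj`, `θω = j + ωθ`, `θ = c + j + 2ωθ` and `ωj = 2mc - cω + 2mj + qωθ`.
lemma omega_mul_ofCoords (hm : q = 4 * m - 1) (v : Fin 4 → ℤ) :
    omega q p * ofCoords q p c v = ofCoords q p c
      ![-m * v 1 + 2 * m * c * v 2 - m * c * v 3, v 0 + v 1 - c * v 2, 2 * m * v 2 - m * v 3,
        (4 * m - 1) * v 2 + (1 - 2 * m) * v 3] := by
  have hq := ne_zero_of_eq_four_mul_sub_one hm
  have hm' : (m : ℚ) = (q + 1) / 4 := by linarith
  simp only [ofCoords_eq hq, omega_eq, QuaternionAlgebra.mk_mul_mk, QuaternionAlgebra.mk.injEq,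
    Matrix.cons_val]
  push_cast [hm']
  refine ⟨?_, ?_, ?_, ?_⟩ <;> field_simp <;> ring

lemma unitJ_mul_ofCoords (hm : q = 4 * m - 1) (hn : c ^ 2 + p = q * n) (v : Fin 4 → ℤ) :
    unitJ q p * ofCoords q p c v = ofCoords q p c
      ![-2 * m * c * v 1 - (4 * m - 1) * n * v 2 + c ^ 2 * v 2 + ((2 * m - 1) * n - c ^ 2) * v 3,
        c * v 1 + n * v 3, v 0 + (1 - 2 * m) * v 1 - c * v 3, -(4 * m - 1) * v 1 - c * v 3] := by
  have hq := ne_zero_of_eq_four_mul_sub_one hm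
  have hm' : (m : ℚ) = (q + 1) / 4 := by linarith
  obtain rfl : p = q * n - c ^ 2 := by linarith
  simp only [ofCoords_eq hq, unitJ, QuaternionAlgebra.mk_mul_mk, QuaternionAlgebra.mk.injEq,
    Matrix.cons_val]
  push_cast [hm']
  refine ⟨?_, ?_, ?_, ?_⟩ <;> field_simp <;> ring

lemma theta_mul_ofCoords (hq : q ≠ 0) (hn : c ^ 2 + p = q * n) (v : Fin 4 → ℤ) :
    theta q p c * ofCoords q p c v = ofCoords q p c
      ![c * v 0 + (c ^ 2 + n) * v 2 - (c ^ 2 + n) * v 3, -2 * n * v 2 + n * v 3,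
        v 0 + v 1 + c * v 2 - c * v 3, 2 * v 0 + v 1 + 2 * c * v 2 - 2 * c * v 3] := by
  obtain rfl : p = q * n - c ^ 2 := by linarith
  simp only [ofCoords_eq hq, theta_eq, QuaternionAlgebra.mk_mul_mk, QuaternionAlgebra.mk.injEq,
    Matrix.cons_val]
  push_cast
  refine ⟨?_, ?_, ?_, ?_⟩ <;> field_simp <;> ring

lemma ofCoords_mem_generatedOrder (v : Fin 4 → ℤ) : ofCoords q p c v ∈ generatedOrder q p c := by
  have generator_mem : {omega q p, unitJ q p, theta q p c} ⊆ (generatedOrder q p c : Set _) :=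
    Subring.subset_closure
  have omega_mem : omega q p ∈ generatedOrder q p c := generator_mem (by simp)
  have unitJ_mem : unitJ q p ∈ generatedOrder q p c := generator_mem (by simp)
  have theta_mem : theta q p c ∈ generatedOrder q p c := generator_mem (by simp)
  rw [ofCoords_apply]
  exact add_mem (add_mem (add_mem (zsmul_mem (one_mem _) _) (zsmul_mem omega_mem _))
    (zsmul_mem unitJ_mem _)) (zsmul_mem (mul_mem omega_mem theta_mem) _)

lemma mem_generatedOrder_iff (hm : q = 4 * m - 1) (hn : c ^ 2 + p = q * n) {x : ℍ[ℚ,-q,-p]} :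
    x ∈ generatedOrder q p c ↔ ∃ v, ofCoords q p c v = x := by
  refine ⟨fun hx ↦ ?_, by rintro ⟨v, rfl⟩; exact ofCoords_mem_generatedOrder v⟩
  refine closure_subset_of_mul_mem_left (M := (LinearMap.range (ofCoords q p c)).toAddSubgroup)
    ⟨![1, 0, 0, 0], by simp [ofCoords_apply]⟩ ?_ hx
  rintro _ (rfl | rfl | rfl) _ ⟨v, rfl⟩
  · exact ⟨_, (omega_mul_ofCoords hm v).symm⟩
  · exact ⟨_, (unitJ_mul_ofCoords hm hn v).symm⟩
  · exact ⟨_, (theta_mul_ofCoords (ne_zero_of_eq_four_mul_sub_one hm) hn v).symm⟩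

lemma Trd_ofCoords (hq : q ≠ 0) (v : Fin 4 → ℤ) :
    Trd (ofCoords q p c v) = (2 * v 0 + v 1 - c * v 3 : ℤ) := by
  rw [Trd_eq, ofCoords_eq hq]
  push_cast
  ring

/-- The reduced norm on `generatedOrder q p c` as a quaternary form in the coordinates of
`ofCoords`, where `q = 4 m - 1` and `c ^ 2 + p = q n`. -/
def normForm (c m n : ℤ) (v : Fin 4 → ℤ) : ℤ :=
  v 0 ^ 2 + v 0 * v 1 + m * v 1 ^ 2 - c * v 0 * v 3 + m * n * v 3 ^ 2
    + ((4 * m - 1) * n - c ^ 2) * (v 2 ^ 2 - v 2 * v 3)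

lemma Nrd_ofCoords (hm : q = 4 * m - 1) (hn : c ^ 2 + p = q * n) (v : Fin 4 → ℤ) :
    Nrd (ofCoords q p c v) = normForm c m n v := by
  have hq := ne_zero_of_eq_four_mul_sub_one hm
  have hm' : (m : ℚ) = (q + 1) / 4 := by linarith
  obtain rfl : p = q * n - c ^ 2 := by linarith
  rw [Nrd_eq, ofCoords_eq hq, normForm]
  push_cast [hm']
  field_simp
  ring

lemma span_generatedOrder (hq : q ≠ 0) :
    Submodule.span ℚ (generatedOrder q p c : Set ℍ[ℚ,-q,-p]) = ⊤ := by
  refine eq_top_iff.2 fun x _ ↦ ?_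
  have generator_mem : {omega q p, unitJ q p, theta q p c} ⊆ (generatedOrder q p c : Set _) :=
    Subring.subset_closure
  have one_eq : (1 : ℍ[ℚ,-q,-p]) = ⟨1, 0, 0, 0⟩ := rfl
  have decomposition : x = (x.re - x.imI + c * x.imK) • 1 + (2 * (x.imI - c * x.imK)) • omega q p
      + x.imJ • unitJ q p + (q * x.imK) • theta q p c := by
    rw [omega_eq, unitJ, theta_eq, one_eq]
    ext <;> simp only [QuaternionAlgebra.smul_mk, QuaternionAlgebra.mk_add_mk, smul_eq_mul] <;>
      field_simp <;> ring
  rw [decomposition]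
  refine add_mem (add_mem (add_mem ?_ ?_) ?_) ?_ <;>
    refine Submodule.smul_mem _ _ (Submodule.subset_span ?_)
  · exact one_mem _
  all_goals exact generator_mem (by simp)

lemma isOrder_generatedOrder (hm : q = 4 * m - 1) (hn : c ^ 2 + p = q * n) :
    IsOrder (generatedOrder q p c : Set ℍ[ℚ,-q,-p]) := by
  have hq := ne_zero_of_eq_four_mul_sub_one hm
  refine ⟨⟨_, rfl⟩, span_generatedOrder hq, fun x hx ↦ ?_⟩
  obtain ⟨v, rfl⟩ := (mem_generatedOrder_iff hm hn).1 hx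
  exact ⟨⟨_, Trd_ofCoords hq v⟩, ⟨_, Nrd_ofCoords hm hn v⟩⟩

lemma generatedOrder_neg : generatedOrder q p (-c) = Subring.closure {omega q p, unitJ q p,
    q⁻¹ • ((c : ℚ) • (⟨0, 1, 0, 0⟩ : ℍ[ℚ,-q,-p]) - ⟨0, 0, 0, 1⟩)} := by
  have neg_theta : -theta q p (-c) =
      q⁻¹ • ((c : ℚ) • (⟨0, 1, 0, 0⟩ : ℍ[ℚ,-q,-p]) - ⟨0, 0, 0, 1⟩) := by
    rw [theta]
    push_cast
    module
  rw [← neg_theta, generatedOrder]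
  refine le_antisymm (Subring.closure_le.2 ?_) (Subring.closure_le.2 ?_)
  all_goals
    rintro _ (rfl | rfl | rfl)
    · exact Subring.subset_closure (by simp)
    · exact Subring.subset_closure (by simp)
    · exact neg_mem_iff.1 (Subring.subset_closure (by simp))

end Coordinates

section BaseLattice

variable {q p : ℚ} {c m n : ℤ}

lemma baseLattice_eq_span : baseLattice q p = Submodule.span ℤ
    {1, omega q p, unitJ q p, omega q p * unitJ q p} := by
  have : (2 : ℚ)⁻¹ • (unitJ q p + ⟨0, 0, 0, 1⟩) = omega q p * unitJ q p := by
    ext <;> simp [omega, unitJ]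
  rw [← this]
  rfl

lemma omega_mul_unitJ (hm : q = 4 * m - 1) :
    omega q p * unitJ q p = ofCoords q p c ![2 * m * c, -c, 2 * m, 4 * m - 1] := by
  simpa [ofCoords_apply] using omega_mul_ofCoords (p := p) (c := c) hm ![0, 0, 1, 0]

lemma toAddSubgroup_baseLattice (hm : q = 4 * m - 1) :
    (baseLattice q p).toAddSubgroup = ((AddSubgroup.zmultiples (4 * m - 1)).comap
      (Pi.evalAddMonoidHom (fun _ : Fin 4 ↦ ℤ) 3)).map (ofCoords q p c).toAddMonoidHom := by
  have omega_mul_unitJ_eq := omega_mul_unitJ (p := p) (c := c) hm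
  rw [baseLattice_eq_span]
  refine le_antisymm ?_ ?_
  · rw [← AddSubgroup.toIntSubmodule.symm_apply_apply (AddSubgroup.map _ _)]
    refine Submodule.span_le.2 ?_
    rintro _ (rfl | rfl | rfl | rfl)
    · exact ⟨![1, 0, 0, 0], by simp, by simp [ofCoords_apply]⟩
    · exact ⟨![0, 1, 0, 0], by simp, by simp [ofCoords_apply]⟩
    · exact ⟨![0, 0, 1, 0], by simp, by simp [ofCoords_apply]⟩
    · exact ⟨_, by simp, omega_mul_unitJ_eq.symm⟩
  · rintro _ ⟨v, ⟨f, h⟩, rfl⟩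
    have : ofCoords q p c v = (v 0 - 2 * m * c * f) • (1 : ℍ[ℚ,-q,-p])
        + (v 1 + c * f) • omega q p + (v 2 - 2 * m * f) • unitJ q p
        + f • (omega q p * unitJ q p) := by
      have hf : v 3 = f * (4 * m - 1) := h.symm
      rw [omega_mul_unitJ_eq, ofCoords_apply, ofCoords_apply, hf]
      simp only [Matrix.cons_val]
      module
    change ofCoords q p c v ∈ Submodule.span ℤ _
    rw [this]
    refine add_mem (add_mem (add_mem ?_ ?_) ?_) ?_ <;>
      exact Submodule.smul_mem _ _ (Submodule.subset_span (by simp))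

lemma baseLattice_subset_generatedOrder (hm : q = 4 * m - 1) :
    (baseLattice q p : Set ℍ[ℚ,-q,-p]) ⊆ generatedOrder q p c := by
  intro x hx
  have : x ∈ (baseLattice q p).toAddSubgroup := hx
  rw [toAddSubgroup_baseLattice hm (c := c)] at this
  obtain ⟨v, -, rfl⟩ := this
  exact ofCoords_mem_generatedOrder v

lemma relIndex_baseLattice (hm : q = 4 * m - 1) (hn : c ^ 2 + p = q * n) :
    (baseLattice q p).toAddSubgroup.relIndex (generatedOrder q p c).toAddSubgroup
      = (4 * m - 1).natAbs := by
  have hq := ne_zero_of_eq_four_mul_sub_one hm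
  have : (generatedOrder q p c).toAddSubgroup
      = AddSubgroup.map (ofCoords q p c).toAddMonoidHom ⊤ := by
    ext x
    simpa using mem_generatedOrder_iff hm hn
  rw [this, toAddSubgroup_baseLattice hm (c := c),
    AddSubgroup.relIndex_map_map_of_injective _ _ (ofCoords_injective hq),
    AddSubgroup.relIndex_top_right, AddSubgroup.index_comap_of_surjective, Int.index_zmultiples]
  exact Function.surjective_eval 3

end BaseLattice

section Maximality

variable {q p : ℚ} {c m n : ℤ}

lemma Nrd_unitJ : Nrd (unitJ q p) = p := by
  simp [Nrd_eq, unitJ]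

lemma Trd_mul_ofCoords (hq : q ≠ 0) (x : ℍ[ℚ,-q,-p]) (v : Fin 4 → ℤ) :
    Trd (x * ofCoords q p c v) = v 0 * (2 * x.re) + v 1 * (x.re - q * x.imI)
      + v 2 * (-2 * p * x.imJ) + v 3 * (p * x.imJ - p * x.imK - c * x.re - c * x.imI) := by
  rw [Trd_eq, ofCoords_eq hq, QuaternionAlgebra.re_mul]
  field_simp
  ring

lemma exists_ofCoords_eq_mul_unitJ (hq : q ≠ 0) {x : ℍ[ℚ,-q,-p]}
    (hx : ∀ v, ∃ t : ℤ, Trd (x * ofCoords q p c v) = t) :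
    ∃ v, ofCoords q p c v = x * unitJ q p := by
  obtain ⟨t₀, h₀⟩ := hx ![1, 0, 0, 0]
  obtain ⟨t₁, h₁⟩ := hx ![0, 1, 0, 0]
  obtain ⟨t₂, h₂⟩ := hx ![0, 0, 1, 0]
  obtain ⟨t₃, h₃⟩ := hx ![0, 0, 0, 1]
  simp only [Trd_mul_ofCoords hq, Matrix.cons_val, Int.cast_zero, Int.cast_one, zero_mul, one_mul,
    zero_add, add_zero] at h₀ h₁ h₂ h₃
  refine ⟨![-t₃ - c * t₁, 2 * t₃ + c * t₀ + t₂, t₀ - t₁, t₀ - 2 * t₁], ?_⟩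
  rw [ofCoords_eq hq]
  ext <;> simp only [unitJ, QuaternionAlgebra.re_mul, QuaternionAlgebra.imI_mul,
    QuaternionAlgebra.imJ_mul, QuaternionAlgebra.imK_mul, Matrix.cons_val] <;>
    push_cast [← h₀, ← h₁, ← h₂, ← h₃] <;> field_simp <;> ring

lemma ofCoords_mul_unitJ (hm : q = 4 * m - 1) (hn : c ^ 2 + p = q * n) (v : Fin 4 → ℤ) :
    ofCoords q p c v * unitJ q p = ofCoords q p c
      ![2 * m * c * v 1 - ((4 * m - 1) * n - c ^ 2) * v 2 + 2 * m * n * v 3,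
        -c * v 1 - n * v 3, v 0 + 2 * m * v 1, (4 * m - 1) * v 1 + c * v 3] := by
  have hq := ne_zero_of_eq_four_mul_sub_one hm
  have hm' : (m : ℚ) = (q + 1) / 4 := by linarith
  obtain rfl : p = q * n - c ^ 2 := by linarith
  simp only [ofCoords_eq hq, unitJ, QuaternionAlgebra.mk_mul_mk, QuaternionAlgebra.mk.injEq,
    Matrix.cons_val]
  push_cast [hm']
  refine ⟨?_, ?_, ?_, ?_⟩ <;> field_simp <;> ring

-- The three expressions are, up to sign, coordinates of `ofCoords q p c v * unitJ q p`.
lemma dvd_coords_of_dvd_normForm {p q : ℕ} (hp : p.Prime) (hpq : p.Coprime q) {c m n : ℤ}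
    (hm : (q : ℤ) = 4 * m - 1) (hn : c ^ 2 + p = q * n) {v : Fin 4 → ℤ}
    (h : (p : ℤ) ∣ normForm c m n v) :
    (p : ℤ) ∣ c * v 1 + n * v 3 ∧ (p : ℤ) ∣ v 0 + 2 * m * v 1 ∧ (p : ℤ) ∣ q * v 1 + c * v 3 := by
  have coprime_q : IsCoprime (p : ℤ) q := Nat.isCoprime_iff_coprime.2 hpq
  -- `q ωθ = c (ω - 2 m) + (ω - 2 m) j`, so modulo `O j` the element `q x` with
  -- `x = ofCoords q p c v` reduces to `X + Y ω`, whose norm is the form below.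
  have dvd_form : (p : ℤ) ∣ (q * v 0 - 2 * m * c * v 3) ^ 2
      + (q * v 0 - 2 * m * c * v 3) * (q * v 1 + c * v 3) + m * (q * v 1 + c * v 3) ^ 2 := by
    obtain ⟨N, hN⟩ := h
    refine ⟨q ^ 2 * N - q ^ 2 * (v 2 ^ 2 - v 2 * v 3) - m * q * v 3 ^ 2, ?_⟩
    rw [normForm, ← hm] at hN
    linear_combination q ^ 2 * hN + (m * q * v 3 ^ 2 + q ^ 2 * (v 2 ^ 2 - v 2 * v 3)) * hn
      + (q * c * v 0 * v 3 - m * c ^ 2 * v 3 ^ 2) * hm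
  obtain ⟨hx, hy⟩ := prime_dvd_of_dvd_sq_add_mul_add_mul_sq hp hpq hm ⟨n, hn⟩ dvd_form
  refine ⟨coprime_q.dvd_of_dvd_mul_left ?_, coprime_q.dvd_of_dvd_mul_left ?_, hy⟩
  · convert (dvd_mul_right (p : ℤ) (v 3)).add (hy.mul_left c) using 1
    linear_combination -v 3 * hn
  · convert hx.add (hy.mul_left (2 * m)) using 1
    ring

lemma exists_ofCoords_mul_unitJ_eq_smul {p q : ℕ} (hp : p.Prime) (hpq : p.Coprime q)
    (hm : (q : ℚ) = 4 * m - 1) (hn : (c ^ 2 + p : ℚ) = q * n) {v : Fin 4 → ℤ}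
    (h : (p : ℤ) ∣ normForm c m n v) :
    ∃ w, ofCoords (q : ℚ) p c v * unitJ (q : ℚ) p = (p : ℤ) • ofCoords (q : ℚ) p c w := by
  have hm' : (q : ℤ) = 4 * m - 1 := mod_cast hm
  have hn' : c ^ 2 + p = q * n := mod_cast hn
  obtain ⟨⟨r, hr⟩, ⟨s, hs⟩, ⟨t, ht⟩⟩ := dvd_coords_of_dvd_normForm hp hpq hm' hn' h
  refine ⟨![2 * m * r - v 2, -r, s, t], ?_⟩
  rw [ofCoords_mul_unitJ hm hn, ← hm', ← map_smul]
  congr 1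
  simp only [Matrix.smul_cons, Matrix.smul_empty, smul_eq_mul, Matrix.vecCons_inj, and_true]
  refine ⟨?_, ?_, ?_, ?_⟩
  · linear_combination 2 * m * hr + v 2 * hn'
  · linear_combination -hr
  · exact hs
  · exact ht

lemma mem_generatedOrder_of_le {p q : ℕ} (hp : p.Prime) (hpq : p.Coprime q)
    (hm : (q : ℚ) = 4 * m - 1) (hn : (c ^ 2 + p : ℚ) = q * n)
    {S : Subring ℍ[ℚ,-(q : ℚ),-(p : ℚ)]}
    (integral : ∀ x ∈ S, (∃ t : ℤ, Trd x = t) ∧ ∃ N : ℤ, Nrd x = N)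
    (le : generatedOrder q p c ≤ S) {x : ℍ[ℚ,-(q : ℚ),-(p : ℚ)]} (hx : x ∈ S) :
    x ∈ generatedOrder (q : ℚ) p c := by
  obtain ⟨v, hv⟩ : ∃ v, ofCoords q p c v = x * unitJ q p :=
    exists_ofCoords_eq_mul_unitJ (ne_zero_of_eq_four_mul_sub_one hm) fun v ↦
      (integral _ (mul_mem hx (le (ofCoords_mem_generatedOrder v)))).1
  have dvd_norm : (p : ℤ) ∣ normForm c m n v := by
    obtain ⟨N, hN⟩ := (integral x hx).2
    refine ⟨N, ?_⟩
    have : (normForm c m n v : ℚ) = p * N := by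
      rw [← Nrd_ofCoords hm hn, hv, Nrd_mul, hN, Nrd_unitJ, mul_comm]
    exact_mod_cast this
  obtain ⟨w, hw⟩ := exists_ofCoords_mul_unitJ_eq_smul hp hpq hm hn dvd_norm
  have hp0 : (p : ℚ) ≠ 0 := mod_cast hp.ne_zero
  have : ofCoords (q : ℚ) p c (-w) = x := by
    refine smul_right_injective _ hp0 ?_
    calc (p : ℚ) • ofCoords (q : ℚ) p c (-w)
        = -((p : ℤ) • ofCoords (q : ℚ) p c w) := by
          rw [map_neg, smul_neg, ← Int.cast_smul_eq_zsmul ℚ, Int.cast_natCast]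
      _ = -(x * (unitJ q p * unitJ q p)) := by rw [← hw, hv, mul_assoc]
      _ = (p : ℚ) • x := by rw [unitJ_mul_self, mul_smul_comm, mul_one, neg_smul, neg_neg]
  exact this ▸ ofCoords_mem_generatedOrder (-w)

lemma isMaximalOrder_generatedOrder {p q : ℕ} (hp : p.Prime) (hpq : p.Coprime q)
    (hm : (q : ℚ) = 4 * m - 1) (hn : (c ^ 2 + p : ℚ) = q * n) :
    IsMaximalOrder (generatedOrder (q : ℚ) p c : Set ℍ[ℚ,-(q : ℚ),-(p : ℚ)]) := by
  refine ⟨isOrder_generatedOrder hm hn, ?_⟩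
  rintro _ ⟨⟨S, rfl⟩, -, integral⟩ le
  exact Set.Subset.antisymm (fun _ ↦ mem_generatedOrder_of_le hp hpq hm hn integral le) le

end Maximality

end MaximalOrderDisc

open MaximalOrderDisc in
theorem maximal_orders_disc_q_general (p q : ℕ) (hp : p.Prime) (hpq : p.Coprime q)
    (hq3 : q % 4 = 3) (c : ℤ) (hc : (q : ℤ) ∣ c ^ 2 + p) :
    IsMaximalOrder (generatedOrder (q : ℚ) p c : Set ℍ[ℚ,-(q : ℚ),-(p : ℚ)])
      ∧ (baseLattice (q : ℚ) p : Set ℍ[ℚ,-(q : ℚ),-(p : ℚ)]) ⊆ generatedOrder (q : ℚ) p c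
      ∧ ((baseLattice (q : ℚ) p).toAddSubgroup.addSubgroupOf
          (generatedOrder (q : ℚ) p c).toAddSubgroup).index = q := by
  obtain ⟨m, hm⟩ : ∃ m : ℤ, (q : ℤ) = 4 * m - 1 := ⟨(q + 1) / 4, by omega⟩
  obtain ⟨n, hn⟩ := hc
  have hmQ : (q : ℚ) = 4 * m - 1 := mod_cast hm
  have hnQ : (c ^ 2 + p : ℚ) = q * n := mod_cast hn
  refine ⟨isMaximalOrder_generatedOrder hp hpq hmQ hnQ, baseLattice_subset_generatedOrder hmQ, ?_⟩
  exact (relIndex_baseLattice hmQ hnQ).trans (by omega)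

/-- For primes `p ≡ 1 (mod 4)` and `q ≡ 3 (mod 4)` with `c² ≡ −p (mod q)`, in `ℍ[ℚ, −q, −p]`
the subring generated by `(1+i)/2`, `j` and `(ci+k)/q` is a maximal order containing
`ℤ·1 + ℤ·(1+i)/2 + ℤ·j + ℤ·(j+k)/2` with additive index `q`; the same holds for the subring
generated by `(1+i)/2`, `j` and `(ci−k)/q`. -/
theorem maximal_orders_disc_q (p q : ℕ) (hp : p.Prime) (hq : q.Prime)
    (hp1 : p % 4 = 1) (hq3 : q % 4 = 3)
    (c : ℤ) (hc : (q : ℤ) ∣ c ^ 2 + (p : ℤ)) :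
    (IsMaximalOrder ((Subring.closure
        ({((2:ℚ)⁻¹) • ((1 : ℍ[ℚ, -(q:ℚ), -(p:ℚ)]) + ⟨0,1,0,0⟩),
          ⟨0,0,1,0⟩,
          ((q:ℚ)⁻¹) • ((c:ℚ) • (⟨0,1,0,0⟩ : ℍ[ℚ, -(q:ℚ), -(p:ℚ)]) + ⟨0,0,0,1⟩)}
          : Set ℍ[ℚ, -(q:ℚ), -(p:ℚ)]) : Subring ℍ[ℚ, -(q:ℚ), -(p:ℚ)])
          : Set ℍ[ℚ, -(q:ℚ), -(p:ℚ)])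
      ∧ (baseLattice (q:ℚ) (p:ℚ) : Set ℍ[ℚ, -(q:ℚ), -(p:ℚ)]) ⊆
          (Subring.closure
            ({((2:ℚ)⁻¹) • ((1 : ℍ[ℚ, -(q:ℚ), -(p:ℚ)]) + ⟨0,1,0,0⟩),
              ⟨0,0,1,0⟩,
              ((q:ℚ)⁻¹) • ((c:ℚ) • (⟨0,1,0,0⟩ : ℍ[ℚ, -(q:ℚ), -(p:ℚ)]) + ⟨0,0,0,1⟩)}
              : Set ℍ[ℚ, -(q:ℚ), -(p:ℚ)]) : Set ℍ[ℚ, -(q:ℚ), -(p:ℚ)])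
      ∧ ((baseLattice (q:ℚ) (p:ℚ)).toAddSubgroup.addSubgroupOf
          (Subring.closure
            ({((2:ℚ)⁻¹) • ((1 : ℍ[ℚ, -(q:ℚ), -(p:ℚ)]) + ⟨0,1,0,0⟩),
              ⟨0,0,1,0⟩,
              ((q:ℚ)⁻¹) • ((c:ℚ) • (⟨0,1,0,0⟩ : ℍ[ℚ, -(q:ℚ), -(p:ℚ)]) + ⟨0,0,0,1⟩)}
              : Set ℍ[ℚ, -(q:ℚ), -(p:ℚ)])).toAddSubgroup).index = q)
    ∧ (IsMaximalOrder ((Subring.closure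
        ({((2:ℚ)⁻¹) • ((1 : ℍ[ℚ, -(q:ℚ), -(p:ℚ)]) + ⟨0,1,0,0⟩),
          ⟨0,0,1,0⟩,
          ((q:ℚ)⁻¹) • ((c:ℚ) • (⟨0,1,0,0⟩ : ℍ[ℚ, -(q:ℚ), -(p:ℚ)]) - ⟨0,0,0,1⟩)}
          : Set ℍ[ℚ, -(q:ℚ), -(p:ℚ)]) : Subring ℍ[ℚ, -(q:ℚ), -(p:ℚ)])
          : Set ℍ[ℚ, -(q:ℚ), -(p:ℚ)])
      ∧ (baseLattice (q:ℚ) (p:ℚ) : Set ℍ[ℚ, -(q:ℚ), -(p:ℚ)]) ⊆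
          (Subring.closure
            ({((2:ℚ)⁻¹) • ((1 : ℍ[ℚ, -(q:ℚ), -(p:ℚ)]) + ⟨0,1,0,0⟩),
              ⟨0,0,1,0⟩,
              ((q:ℚ)⁻¹) • ((c:ℚ) • (⟨0,1,0,0⟩ : ℍ[ℚ, -(q:ℚ), -(p:ℚ)]) - ⟨0,0,0,1⟩)}
              : Set ℍ[ℚ, -(q:ℚ), -(p:ℚ)]) : Set ℍ[ℚ, -(q:ℚ), -(p:ℚ)])
      ∧ ((baseLattice (q:ℚ) (p:ℚ)).toAddSubgroup.addSubgroupOf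
          (Subring.closure
            ({((2:ℚ)⁻¹) • ((1 : ℍ[ℚ, -(q:ℚ), -(p:ℚ)]) + ⟨0,1,0,0⟩),
              ⟨0,0,1,0⟩,
              ((q:ℚ)⁻¹) • ((c:ℚ) • (⟨0,1,0,0⟩ : ℍ[ℚ, -(q:ℚ), -(p:ℚ)]) - ⟨0,0,0,1⟩)}
              : Set ℍ[ℚ, -(q:ℚ), -(p:ℚ)])).toAddSubgroup).index = q) := by
  have hpq : p.Coprime q := (Nat.coprime_primes hp hq).2 (by rintro rfl; omega)
  refine ⟨maximal_orders_disc_q_general p q hp hpq hq3 c hc, ?_⟩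
  have neg_general := maximal_orders_disc_q_general p q hp hpq hq3 (-c) (by rwa [neg_sq])
  rwa [MaximalOrderDisc.generatedOrder_neg] at neg_general
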